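/- arXiv:2207.14701 — 5 statements merged into one kernel-verified Lean document; each statement's English description precedes it below -/
import Mathlib

section
/- Let n ≥ 1 and let g : ℝ^{n+1} → Sym(n+1,ℝ) be a continuous map into symmetric (n+1)×(n+1) real matrices of null-coordinate form, i.e. g_{00} = 0, g_{01} = g_{10} = 1, and g_{0i} = g_{i0} = 0 for 2 ≤ i ≤ n (indices run 0,…,n). For ε > 0 let A_ε := diag(1, ε², ε, …, ε), and define h_ε : ℝ^{n+1} → Sym(n+1,ℝ) by (h_ε)_{00} = 0, (h_ε)_{01} = (h_ε)_{10} = 1, (h_ε)_{0i} = 0, (h_ε)_{11}(y) = ε² g_{11}(A_ε y), (h_ε)_{1j}(y) = (h_ε)_{j1}(y) = ε g_{1j}(A_ε y) for 2 ≤ j ≤ n, and (h_ε)_{ij}(y) = g_{ij}(A_ε y) for 2 ≤ i,j ≤ n. Then: (1) for every y ∈ ℝ^{n+1} and every ε > 0, A_εᵀ · g(A_ε y) · A_ε = ε² · h_ε(y) (i.e. the pullback of g under the scaling diffeomorphism (x⁰,x¹,x²,…,xⁿ) ↦ (x⁰, x¹/ε², x²/ε, …, xⁿ/ε) is homothetic,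 with factor ε², to h_ε); and (2) as ε → 0⁺, h_ε(y) converges entrywise to the matrix h_PW(y) with (h_PW)_{00} = 0, (h_PW)_{01} = (h_PW)_{10} = 1, (h_PW)_{11} = (h_PW)_{0i} = (h_PW)_{1i} = 0, and (h_PW)_{ij}(y) = g_{ij}(y⁰, 0, …, 0) for 2 ≤ i,j ≤ n. -/
/-!
Since `A ε` is diagonal, with entries `a i`, the `(i, j)` entry of the pullback is
`a i * g (A ε y) i j * a j`, and the weights `a 0 = 1`, `a 1 = ε²`, `a i = ε` make part (1) an
entrywise identity: the null form of `g` removes exactly the entries of row and column `0` whose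
weight is `1` or `ε`, hence not divisible by `ε²`. For part (2), `A ε y → (y⁰, 0, …, 0)` as `ε → 0`, so by continuity every
`g (A ε y) i j` converges, and the explicit factors `ε²` and `ε` kill the entries with an
index `1` outside row and column `0`.
-/

open Matrix Filter

/-- Penrose's plane wave limit: the pullback of a null-coordinate-form metric `g` under the
anisotropic scaling with matrix `A ε = diag(1, ε², ε, …, ε)` is `ε²`-homothetic to the family
`h ε`, which converges entrywise as `ε → 0⁺` to the plane wave metric in Rosen coordinates. -/
theorem stmt_0 (n : ℕ) (hn : 1 ≤ n)
    (g : (Fin (n+1) → ℝ) → Matrix (Fin (n+1)) (Fin (n+1)) ℝ)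
    (hg_cont : Continuous g)
    (hg_symm : ∀ x, (g x).IsSymm)
    (hg00 : ∀ x, g x 0 0 = 0)
    (hg01 : ∀ x, g x 0 1 = 1)
    (hg0i : ∀ x, ∀ i : Fin (n+1), 2 ≤ (i : ℕ) → g x 0 i = 0)
    (A : ℝ → Matrix (Fin (n+1)) (Fin (n+1)) ℝ)
    (hA : ∀ ε, A ε = Matrix.diagonal (fun i => if i = 0 then 1 else if i = 1 then ε^2 else ε))
    (h : ℝ → (Fin (n+1) → ℝ) → Matrix (Fin (n+1)) (Fin (n+1)) ℝ)
    (hh : ∀ ε y (i j : Fin (n+1)), h ε y i j =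
      if i = 0 ∧ j = 0 then 0
      else if (i = 0 ∧ j = 1) ∨ (i = 1 ∧ j = 0) then 1
      else if i = 0 ∨ j = 0 then 0
      else if i = 1 ∧ j = 1 then ε^2 * g ((A ε).mulVec y) 1 1
      else if i = 1 then ε * g ((A ε).mulVec y) 1 j
      else if j = 1 then ε * g ((A ε).mulVec y) i 1
      else g ((A ε).mulVec y) i j) :
    (∀ y : Fin (n+1) → ℝ, ∀ ε : ℝ, 0 < ε →
      (A ε)ᵀ * g ((A ε).mulVec y) * A ε = (ε^2) • h ε y) ∧
    (∀ y : Fin (n+1) → ℝ, ∀ i j : Fin (n+1),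
      Tendsto (fun ε => h ε y i j) (nhdsWithin 0 (Set.Ioi 0))
        (nhds (if i = 0 ∧ j = 0 then 0
          else if (i = 0 ∧ j = 1) ∨ (i = 1 ∧ j = 0) then 1
          else if i = 0 ∨ i = 1 ∨ j = 0 ∨ j = 1 then 0
          else g (fun k => if k = 0 then y 0 else 0) i j))) := by
  -- `n ≥ 1` makes the indices `0` and `1` of `Fin (n + 1)` distinct.
  have h10 : (1 : Fin (n+1)) ≠ 0 := by
    intro e
    have := congrArg Fin.val e
    rw [Fin.val_one', Fin.val_zero, Nat.mod_eq_of_lt (by omega)] at this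
    omega
  have h2 : ∀ i : Fin (n+1), i ≠ 0 → i ≠ 1 → 2 ≤ (i : ℕ) := by
    intro i hi0 hi1
    have a0 : (i : ℕ) ≠ 0 := fun e => hi0 (Fin.ext (by simpa using e))
    have a1 : (i : ℕ) ≠ 1 := fun e => hi1 (Fin.ext (by
      rw [Fin.val_one', Nat.mod_eq_of_lt (by omega), e]))
    omega
  have hz : ∀ x i, i ≠ 0 → i ≠ 1 → g x 0 i = 0 := fun x i a b => hg0i x i (h2 i a b)
  have hz' : ∀ x i, i ≠ 0 → i ≠ 1 → g x i 0 = 0 := fun x i a b => by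
    rw [(hg_symm x).apply]; exact hz x i a b
  have hg10 : ∀ x, g x 1 0 = 1 := fun x => by rw [(hg_symm x).apply]; exact hg01 x
  refine ⟨fun y ε _ => ?_, fun y i j => ?_⟩
  · ext i j
    rw [Matrix.smul_apply, hh]
    generalize (A ε).mulVec y = x
    rw [hA, Matrix.diagonal_transpose, Matrix.mul_diagonal, Matrix.diagonal_mul, smul_eq_mul]
    by_cases i0 : i = 0
    · subst i0
      by_cases j0 : j = 0
      · subst j0; simp [hg00]
      by_cases j1 : j = 1
      · subst j1; simp [hg01, h10]
      simp [j0, j1, hz x j j0 j1]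
    by_cases i1 : i = 1
    · subst i1
      by_cases j0 : j = 0
      · subst j0; simp [hg10, h10]
      by_cases j1 : j = 1
      · subst j1; simp [h10]; ring
      simp [j0, j1, h10]; ring
    by_cases j0 : j = 0
    · subst j0; simp [i0, i1, hz' x i i0 i1]
    by_cases j1 : j = 1
    · subst j1; simp [i0, i1, h10]; ring
    simp [i0, i1, j0, j1]; ring
  · have hid : Tendsto (fun ε : ℝ => ε) (nhdsWithin 0 (Set.Ioi 0)) (nhds 0) :=
      tendsto_id.mono_left nhdsWithin_le_nhds
    have hsq : Tendsto (fun ε : ℝ => ε ^ 2) (nhdsWithin 0 (Set.Ioi 0)) (nhds 0) := by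
      simpa using hid.pow 2
    have hx : Tendsto (fun ε => (A ε).mulVec y) (nhdsWithin 0 (Set.Ioi 0))
        (nhds (fun k => if k = 0 then y 0 else 0)) := by
      rw [tendsto_pi_nhds]
      intro k
      simp only [hA, Matrix.mulVec_diagonal]
      by_cases k0 : k = 0
      · subst k0; simp
      by_cases k1 : k = 1
      · subst k1; simpa [h10] using hsq.mul_const (y 1)
      simpa [k0, k1] using hid.mul_const (y k)
    have hgl : ∀ a b, Tendsto (fun ε => g ((A ε).mulVec y) a b) (nhdsWithin 0 (Set.Ioi 0))
        (nhds (g (fun k => if k = 0 then y 0 else 0) a b)) := fun a b =>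
      ((hg_cont.matrix_elem a b).tendsto _).comp hx
    simp only [hh]
    by_cases i0 : i = 0
    · by_cases j0 : j = 0 <;> by_cases j1 : j = 1 <;> simp [i0, j0, j1, h10]
    by_cases j0 : j = 0
    · by_cases i1 : i = 1 <;> simp [i0, j0, i1, h10]
    by_cases i1 : i = 1
    · by_cases j1 : j = 1
      · simpa [i1, j1, h10] using hsq.mul (hgl 1 1)
      · simpa [i1, j0, j1, h10] using hid.mul (hgl 1 j)
    by_cases j1 : j = 1
    · simpa [i0, i1, j1, h10] using hid.mul (hgl i 1)
    simpa [i0, i1, j0, j1] using hgl i j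
end

section
/- Let n ≥ 2, let H : ℝ^{n+1} → ℝ be a smooth function of the coordinates (v, u, x², …, xⁿ) that is independent of v, and let g be the pp-wave metric in Brinkmann coordinates: g_{vv} = 0, g_{vu} = g_{uv} = 1, g_{uu} = H, g_{ii} = 1 for 2 ≤ i ≤ n, all other entries zero. Then the coordinate curvature 4-tensor of g satisfies Rm(∂_i, ∂_u, ∂_u, ∂_j) = −(1/2) ∂_i∂_j H for all 2 ≤ i, j ≤ n, and every component of Rm that is not obtained from these by the symmetries of the curvature tensor vanishes; moreover the coordinate Ricci tensor satisfies Ric(∂_u, ∂_u) = −(1/2) ΔH, where ΔH := Σ_{i=2}^{n} ∂_i² H, and all other components of Ric vanish. In particular g is Ricci-flat if and only if H is harmonic in the variables x², …, xⁿ. -/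
/-!
Write `δ` for indicators and `H_i = ∂_i H`. The only nonconstant metric entry is
`g_{uu} = H`, and since `H_v = 0` the explicit inverse gives the Christoffel symbols
`Γ^v_{ij} = ½ (δ_{ju} H_i + δ_{iu} H_j - δ_{iu} δ_{ju} H_u)`, `Γ^u_{ij} = 0`, and
`Γ^k_{ij} = -½ δ_{iu} δ_{ju} H_k` for the transverse indices `k` (`ppMetric_Chr`).

The products `Γ^l_{ap} Γ^p_{bc}` survive only for transverse `p`, and then carry the factor
`δ_{au} δ_{bu}`, which is symmetric in `a, b`; hence the quadratic part of the curvature cancels and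
`R_{abc}{}^l = ∂_a Γ^l_{bc} - ∂_b Γ^l_{ac}` is an explicit linear expression in the Hessian of `H`
(`ppMetric_RiemUp`). Lowering an index or contracting, together with symmetry of the Hessian and
`∂_v ∂_a H = ∂_a ∂_v H = 0`, yields every component of `Rm` and `Ric`.
-/

open Matrix

/-- Partial derivative of a function on `ℝ^m` in the `i`-th coordinate direction. -/
noncomputable def pd {m : ℕ} (i : Fin m) (f : (Fin m → ℝ) → ℝ) (x : Fin m → ℝ) : ℝ :=
  fderiv ℝ f x (Pi.single i 1)

/-- Christoffel symbols `Γ^k_{ij}` of a metric given in coordinates. -/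
noncomputable def Chr {m : ℕ} (g : (Fin m → ℝ) → Matrix (Fin m) (Fin m) ℝ)
    (k i j : Fin m) (x : Fin m → ℝ) : ℝ :=
  (1/2) * ∑ l, (g x)⁻¹ k l *
    (pd i (fun y => g y j l) x + pd j (fun y => g y i l) x - pd l (fun y => g y i j) x)

/-- Coordinate curvature `R_{ijk}{}^l`. -/
noncomputable def RiemUp {m : ℕ} (g : (Fin m → ℝ) → Matrix (Fin m) (Fin m) ℝ)
    (i j k l : Fin m) (x : Fin m → ℝ) : ℝ :=
  pd i (Chr g l j k) x - pd j (Chr g l i k) x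
  + ∑ p, (Chr g l i p x * Chr g p j k x - Chr g l j p x * Chr g p i k x)

/-- Coordinate curvature 4-tensor `Rm_{ijkl} = Σ_m g_{lm} R_{ijk}{}^m`. -/
noncomputable def Rm4 {m : ℕ} (g : (Fin m → ℝ) → Matrix (Fin m) (Fin m) ℝ)
    (i j k l : Fin m) (x : Fin m → ℝ) : ℝ :=
  ∑ p, g x l p * RiemUp g i j k p x

/-- Coordinate Ricci tensor `Ric_{jk} = Σ_i R_{ijk}{}^i`. -/
noncomputable def Ric {m : ℕ} (g : (Fin m → ℝ) → Matrix (Fin m) (Fin m) ℝ)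
    (j k : Fin m) (x : Fin m → ℝ) : ℝ :=
  ∑ i, RiemUp g i j k i x

/-- The pp-wave metric in Brinkmann coordinates, with index `0 = v` and index `1 = u`. -/
def ppMetric {m : ℕ} (H : (Fin (m+3) → ℝ) → ℝ) (x : Fin (m+3) → ℝ) :
    Matrix (Fin (m+3)) (Fin (m+3)) ℝ :=
  Matrix.of fun i j =>
    if (i = 0 ∧ j = 1) ∨ (i = 1 ∧ j = 0) then 1
    else if i = 1 ∧ j = 1 then H x
    else if i = j ∧ 2 ≤ (i : ℕ) then 1
    else 0

/-- The explicit inverse of `ppMetric`. -/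
def ppInverse {m : ℕ} (H : (Fin (m+3) → ℝ) → ℝ) (x : Fin (m+3) → ℝ) :
    Matrix (Fin (m+3)) (Fin (m+3)) ℝ :=
  Matrix.of fun i j =>
    if (i = 0 ∧ j = 1) ∨ (i = 1 ∧ j = 0) then 1
    else if i = 0 ∧ j = 0 then - H x
    else if i = j ∧ 2 ≤ (i : ℕ) then 1
    else 0

/-- Every coordinate index is `v`, `u`, or transverse. -/
lemma index_cases {m : ℕ} (i : Fin (m+3)) : i = 0 ∨ i = 1 ∨ ∃ k : Fin (m+1), i = k.succ.succ := by
  induction i using Fin.cases with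
  | zero => simp
  | succ i =>
    induction i using Fin.cases with
    | zero => simp
    | succ k => exact Or.inr (Or.inr ⟨k, rfl⟩)

lemma sum_split {m : ℕ} (f : Fin (m+3) → ℝ) :
    ∑ p, f p = f 0 + f 1 + ∑ k : Fin (m+1), f k.succ.succ := by
  rw [Fin.sum_univ_succ, Fin.sum_univ_succ, ← add_assoc]
  rfl

lemma succ_succ_ne_one {m : ℕ} (k : Fin (m+1)) : k.succ.succ ≠ (1 : Fin (m+3)) := by
  intro h
  have := congrArg Fin.val h
  simp at this

lemma one_ne_succ_succ {m : ℕ} (k : Fin (m+1)) : (1 : Fin (m+3)) ≠ k.succ.succ :=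
  (succ_succ_ne_one k).symm

lemma zero_ne_succ_succ {m : ℕ} (k : Fin (m+1)) : (0 : Fin (m+3)) ≠ k.succ.succ :=
  (Fin.succ_ne_zero _).symm

lemma ppMetric_inv {m : ℕ} (H : (Fin (m+3) → ℝ) → ℝ) (x : Fin (m+3) → ℝ) :
    (ppMetric H x)⁻¹ = ppInverse H x := by
  apply Matrix.inv_eq_right_inv
  ext i j
  rw [Matrix.mul_apply, sum_split]
  rcases index_cases i with rfl | rfl | ⟨i, rfl⟩ <;>
  rcases index_cases j with rfl | rfl | ⟨j, rfl⟩ <;>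
  simp [ppMetric, ppInverse, Matrix.one_apply, succ_succ_ne_one, one_ne_succ_succ,
    zero_ne_succ_succ]

lemma pd_const {m : ℕ} (i : Fin m) (c : ℝ) (x : Fin m → ℝ) : pd i (fun _ => c) x = 0 := by
  simp [pd]

lemma pd_ppMetric {m : ℕ} (H : (Fin (m+3) → ℝ) → ℝ) (a i j : Fin (m+3)) (x : Fin (m+3) → ℝ) :
    pd a (fun y => ppMetric H y i j) x = if i = 1 ∧ j = 1 then pd a H x else 0 := by
  by_cases h : i = 1 ∧ j = 1
  · obtain ⟨rfl, rfl⟩ := h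
    simp [ppMetric]
  · simp only [ppMetric, Matrix.of_apply, h, if_false, pd_const]

lemma pd_zero_eq_zero {m : ℕ} {H : (Fin (m+3) → ℝ) → ℝ} (hH : ContDiff ℝ (⊤ : ℕ∞) H)
    (hHv : ∀ (x : Fin (m+3) → ℝ) (c : ℝ), H (Function.update x 0 c) = H x) :
    pd 0 H = fun _ => 0 := by
  funext x
  have hd : DifferentiableAt ℝ H x := (hH.differentiable (by simp)) x
  have h1 : HasDerivAt (fun t : ℝ => H (Function.update x 0 t)) (pd 0 H x) (x 0) := by
    have h2 : HasFDerivAt H (fderiv ℝ H x) (Function.update x 0 (x 0)) := by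
      simpa using hd.hasFDerivAt
    exact h2.comp_hasDerivAt (x 0) (hasDerivAt_update x 0 (x 0))
  simp only [hHv] at h1
  exact h1.unique (hasDerivAt_const _ _)

lemma differentiable_pd {m : ℕ} {H : (Fin m → ℝ) → ℝ} (hH : ContDiff ℝ (⊤ : ℕ∞) H) (i : Fin m) :
    Differentiable ℝ (pd i H) := by
  have h1 : Differentiable ℝ (fderiv ℝ H) :=
    ((contDiff_infty.1 hH 2).fderiv_right (m := 1) (by norm_num)).differentiable (by simp)
  exact fun x => (h1 x).clm_apply (differentiableAt_const _)

lemma pd_pd_apply {m : ℕ} {H : (Fin m → ℝ) → ℝ} (hH : ContDiff ℝ (⊤ : ℕ∞) H) (i j : Fin m)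
    (x : Fin m → ℝ) :
    pd i (pd j H) x = fderiv ℝ (fderiv ℝ H) x (Pi.single i 1) (Pi.single j 1) := by
  have h1 : Differentiable ℝ (fderiv ℝ H) :=
    ((contDiff_infty.1 hH 2).fderiv_right (m := 1) (by norm_num)).differentiable (by simp)
  have h2 := (h1 x).hasFDerivAt.clm_apply
    (hasFDerivAt_const (Pi.single j 1 : Fin m → ℝ) x)
  have h3 : fderiv ℝ (pd j H) x = _ := h2.fderiv
  rw [pd, h3]
  simp

lemma pd_comm {m : ℕ} {H : (Fin m → ℝ) → ℝ} (hH : ContDiff ℝ (⊤ : ℕ∞) H) (i j : Fin m)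
    (x : Fin m → ℝ) : pd i (pd j H) x = pd j (pd i H) x := by
  rw [pd_pd_apply hH, pd_pd_apply hH]
  have h : IsSymmSndFDerivAt ℝ H x :=
    (contDiff_infty.1 hH 2).contDiffAt.isSymmSndFDerivAt (by simp)
  exact h _ _

/-- The Christoffel symbols of the pp-wave metric, as a combination of first derivatives of `H`
with constant coefficients. -/
lemma ppMetric_Chr {m : ℕ} {H : (Fin (m+3) → ℝ) → ℝ} (h0 : pd 0 H = fun _ => 0)
    (k i j : Fin (m+3)) :
    Chr (ppMetric H) k i j = fun x =>
      (if k = 0 ∧ j = 1 then 1/2 else 0) * pd i H x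
      + (if k = 0 ∧ i = 1 then 1/2 else 0) * pd j H x
      + (if k = 0 ∧ i = 1 ∧ j = 1 then -(1/2) else 0) * pd 1 H x
      + (if 2 ≤ (k : ℕ) ∧ i = 1 ∧ j = 1 then -(1/2) else 0) * pd k H x := by
  funext x
  simp only [Chr, ppMetric_inv, pd_ppMetric]
  rw [sum_split]
  by_cases hi : i = 1 <;> by_cases hj : j = 1 <;>
  rcases index_cases k with rfl | rfl | ⟨k, rfl⟩ <;>
  simp [ppInverse, hi, hj, h0, succ_succ_ne_one, one_ne_succ_succ, zero_ne_succ_succ]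

lemma pd_linear {m : ℕ} {f₁ f₂ f₃ f₄ : (Fin m → ℝ) → ℝ} (h₁ : Differentiable ℝ f₁)
    (h₂ : Differentiable ℝ f₂) (h₃ : Differentiable ℝ f₃) (h₄ : Differentiable ℝ f₄)
    (c₁ c₂ c₃ c₄ : ℝ) (a : Fin m) (x : Fin m → ℝ) :
    pd a (fun y => c₁ * f₁ y + c₂ * f₂ y + c₃ * f₃ y + c₄ * f₄ y) x =
      c₁ * pd a f₁ x + c₂ * pd a f₂ x + c₃ * pd a f₃ x + c₄ * pd a f₄ x := by
  have h := ((((h₁ x).hasFDerivAt.const_mul c₁).add ((h₂ x).hasFDerivAt.const_mul c₂)).add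
    ((h₃ x).hasFDerivAt.const_mul c₃)).add ((h₄ x).hasFDerivAt.const_mul c₄)
  have hsum : fderiv ℝ (fun y => c₁ * f₁ y + c₂ * f₂ y + c₃ * f₃ y + c₄ * f₄ y) x = _ := h.fderiv
  rw [pd, hsum]
  simp [pd]

/-- The part of the curvature quadratic in the Christoffel symbols vanishes. -/
lemma ppMetric_quadratic {m : ℕ} {H : (Fin (m+3) → ℝ) → ℝ} (h0 : pd 0 H = fun _ => 0)
    (a b c l : Fin (m+3)) (x : Fin (m+3) → ℝ) :
    ∑ p, (Chr (ppMetric H) l a p x * Chr (ppMetric H) p b c x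
      - Chr (ppMetric H) l b p x * Chr (ppMetric H) p a c x) = 0 := by
  simp only [ppMetric_Chr h0]
  rw [sum_split]
  by_cases ha : a = 1 <;> by_cases hb : b = 1 <;>
  simp [ha, hb, h0, succ_succ_ne_one]

lemma ppMetric_RiemUp {m : ℕ} {H : (Fin (m+3) → ℝ) → ℝ} (hH : ContDiff ℝ (⊤ : ℕ∞) H)
    (h0 : pd 0 H = fun _ => 0) (a b c l : Fin (m+3)) (x : Fin (m+3) → ℝ) :
    RiemUp (ppMetric H) a b c l x =
      (if l = 0 ∧ b = 1 ∧ c ≠ 1 then 1/2 else 0) * pd a (pd c H) x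
      - (if l = 0 ∧ a = 1 ∧ c ≠ 1 then 1/2 else 0) * pd b (pd c H) x
      - (if 2 ≤ (l : ℕ) ∧ b = 1 ∧ c = 1 then 1/2 else 0) * pd a (pd l H) x
      + (if 2 ≤ (l : ℕ) ∧ a = 1 ∧ c = 1 then 1/2 else 0) * pd b (pd l H) x := by
  have hd := differentiable_pd hH
  rw [RiemUp, ppMetric_quadratic h0, ppMetric_Chr h0, ppMetric_Chr h0,
    pd_linear (hd _) (hd _) (hd _) (hd _), pd_linear (hd _) (hd _) (hd _) (hd _),
    pd_comm hH b a]
  by_cases ha : a = 1 <;> by_cases hb : b = 1 <;> by_cases hc : c = 1 <;>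
  rcases index_cases l with rfl | rfl | ⟨l, rfl⟩ <;>
  simp [ha, hb, hc, pd_comm hH _ 1]

/-- Curvature of the pp-wave metric in Brinkmann coordinates `(v,u,x²,…,xⁿ)` (index `0 = v`,
index `1 = u`): `Rm(∂ᵢ,∂ᵤ,∂ᵤ,∂ⱼ) = −(1/2)∂ᵢ∂ⱼH`, all components not obtained from these by the
curvature symmetries vanish, `Ric(∂ᵤ,∂ᵤ) = −(1/2)ΔH` with all other Ricci components zero; in
particular `g` is Ricci-flat iff `H` is harmonic in `x²,…,xⁿ`. -/
theorem stmt_12 (n : ℕ) (hn : 2 ≤ n)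
    (H : (Fin (n+1) → ℝ) → ℝ) (hH : ContDiff ℝ (⊤ : ℕ∞) H)
    (hHv : ∀ (x : Fin (n+1) → ℝ) (c : ℝ), H (Function.update x 0 c) = H x)
    (g : (Fin (n+1) → ℝ) → Matrix (Fin (n+1)) (Fin (n+1)) ℝ)
    (hg : ∀ x (i j : Fin (n+1)), g x i j =
      if (i = 0 ∧ j = 1) ∨ (i = 1 ∧ j = 0) then 1
      else if i = 1 ∧ j = 1 then H x
      else if i = j ∧ 2 ≤ (i : ℕ) then 1
      else 0) :
    (∀ x : Fin (n+1) → ℝ,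
      (∀ i j : Fin (n+1), 2 ≤ (i : ℕ) → 2 ≤ (j : ℕ) →
        Rm4 g i 1 1 j x = -(1/2) * pd i (pd j H) x) ∧
      (∀ a b c d : Fin (n+1),
        ¬ (((a = 1 ∧ 2 ≤ (b : ℕ)) ∨ (2 ≤ (a : ℕ) ∧ b = 1)) ∧
            ((c = 1 ∧ 2 ≤ (d : ℕ)) ∨ (2 ≤ (c : ℕ) ∧ d = 1))) →
        Rm4 g a b c d x = 0) ∧
      Ric g 1 1 x = -(1/2) * ∑ i : Fin (n+1), (if 2 ≤ (i : ℕ) then pd i (pd i H) x else 0) ∧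
      (∀ j k : Fin (n+1), ¬ (j = 1 ∧ k = 1) → Ric g j k x = 0)) ∧
    ((∀ (x : Fin (n+1) → ℝ) (j k : Fin (n+1)), Ric g j k x = 0) ↔
      (∀ x : Fin (n+1) → ℝ,
        (∑ i : Fin (n+1), if 2 ≤ (i : ℕ) then pd i (pd i H) x else 0) = 0)) := by
  obtain ⟨m, rfl⟩ : ∃ m, n = m + 2 := ⟨n - 2, by omega⟩
  obtain rfl : g = ppMetric H := by
    funext x
    ext i j
    rw [hg x i j]
    rfl
  have h0 : pd 0 H = fun _ => 0 := pd_zero_eq_zero hH hHv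
  have hl : ∀ a x, pd a (pd 0 H) x = 0 := fun a x => by rw [h0, pd_const]
  have hr : ∀ a x, pd 0 (pd a H) x = 0 := fun a x => by rw [pd_comm hH, hl]
  have hRic : ∀ x, Ric (ppMetric H) 1 1 x =
      -(1/2) * ∑ i : Fin (m+3), (if 2 ≤ (i : ℕ) then pd i (pd i H) x else 0) := by
    intro x
    simp only [Ric, ppMetric_RiemUp hH h0]
    rw [sum_split, sum_split]
    simp [succ_succ_ne_one, Finset.mul_sum]
  have hRic' : ∀ x (j k : Fin (m+3)), ¬ (j = 1 ∧ k = 1) → Ric (ppMetric H) j k x = 0 := by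
    intro x j k hjk
    simp only [Ric, ppMetric_RiemUp hH h0]
    rw [sum_split]
    by_cases hj : j = 1
    · have hk : k ≠ 1 := fun h => hjk ⟨hj, h⟩
      simp [hj, hk, hr]
    · simp [hj, succ_succ_ne_one]
  refine ⟨fun x => ⟨?_, ?_, hRic x, hRic' x⟩, ?_⟩
  · intro i j hi hj
    simp only [Rm4, ppMetric_RiemUp hH h0]
    rw [sum_split]
    rcases index_cases i with rfl | rfl | ⟨i, rfl⟩
    · simp at hi
    · simp at hi
    rcases index_cases j with rfl | rfl | ⟨j, rfl⟩
    · simp at hj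
    · simp at hj
    simp [ppMetric, succ_succ_ne_one]
  · intro a b c d h
    simp only [Rm4, ppMetric_RiemUp hH h0]
    rw [sum_split]
    rcases index_cases a with rfl | rfl | ⟨a, rfl⟩ <;>
    rcases index_cases b with rfl | rfl | ⟨b, rfl⟩ <;>
    rcases index_cases c with rfl | rfl | ⟨c, rfl⟩ <;>
    rcases index_cases d with rfl | rfl | ⟨d, rfl⟩ <;>
    simp [ppMetric, hl, hr, succ_succ_ne_one, one_ne_succ_succ, zero_ne_succ_succ] at h ⊢
  · constructor
    · intro h x
      have h1 := h x 1 1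
      rw [hRic] at h1
      linarith
    · intro h x j k
      by_cases hjk : j = 1 ∧ k = 1
      · obtain ⟨rfl, rfl⟩ := hjk
        rw [hRic, h x, mul_zero]
      · exact hRic' x j k hjk
end

section
/- Let n ≥ 3 and let g be a smooth map from an open subset of ℝ^{n+1} (coordinates x⁰, x¹, …, xⁿ) to invertible symmetric (n+1)×(n+1) real matrices of null-coordinate form — g_{00} = 0, g_{01} = g_{10} = 1, g_{0i} = g_{i0} = 0 for 2 ≤ i ≤ n, with the block (g_{ij})_{2 ≤ i,j ≤ n} positive definite — and assume all components g_{αβ} are independent of x⁰. For fixed b, c ∈ ℝ, let ḡ_{b,c} be the Riemannian metric on the slice {x⁰ = b, x¹ = c}, given in the coordinates (x², …, xⁿ) by the matrix (g_{ij}(c, x², …, xⁿ))_{2 ≤ i,j ≤ n}. Then for all 2 ≤ i, j, k, l ≤ n and all points p = (b, c, x², …, xⁿ) in the domain, the coordinate curvature 4-tensor of the ambient metric g satisfies Rm_g(∂_i, ∂_j, ∂_k, ∂_l)(p) = Rm_{ḡ_{b,c}}(∂_i, ∂_j, ∂_k, ∂_l)(x², …, xⁿ), the coordinate curvature 4-tensor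 of the induced slice metric. -/
/-!
Because `g_{0β}` is constant and `g` does not depend on `x⁰`, the vector field `∂₀` is parallel:
`Γ^k_{a0} = 0` and, since row `1` of `g⁻¹` is `e₀`, also `Γ^1_{ab} = 0` (`chr_one`, `chr_zero`).
Hence in `Rm_{ijkl}` with slice indices every sum over an index `p` reduces to a sum over the slice
indices: the terms `p = 0` and `p = 1` vanish.

The slice block of `g⁻¹` is the inverse of the slice block of `g` (`inv_block`), as
`(g⁻¹)^{p1} = 0` for slice indices `p` and `g_{0q} = 0` for slice indices `q`. So the Christoffel
symbols `Γ^p_{ij}` of `g` with all indices tangent to the slice restrict to those of the induced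
metric (`chr_slice`), and by the chain rule along the affine embedding of the slice their
tangential derivatives agree as well. The chain rule needs the Christoffel symbols to be
differentiable, which follows from smoothness of `g` and Cramer's rule for `g⁻¹`.

The slice directions are written `i.succ.succ` with `i : Fin m`, the ambient index type being
`Fin (m + 2)`.
-/

open Matrix

/-- A symmetric matrix whose zeroth row is `(0, 1, 0, …, 0)`, and whose block of indices `≥ 2` is positive
definite: the pointwise null-coordinate form. -/
structure NullMatrix {m : ℕ} (A : Matrix (Fin (m + 2)) (Fin (m + 2)) ℝ) : Prop where
  symm : A.IsSymm
  row : A 0 = Pi.single 1 1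
  pos : (A.submatrix (fun i : Fin m => i.succ.succ) (fun i : Fin m => i.succ.succ)).PosDef

namespace NullMatrix

variable {m : ℕ} {A : Matrix (Fin (m + 2)) (Fin (m + 2)) ℝ}

lemma col (h : NullMatrix A) (a : Fin (m + 2)) : A a 0 = (Pi.single 1 1 : Fin (m + 2) → ℝ) a := by
  rw [← h.row, h.symm.apply]

/-- A kernel vector `v` has `v₁ = 0` by row `0`, then vanishing slice part by positive
definiteness, then `v₀ = 0` by row `1`. -/
lemma det_ne_zero (h : NullMatrix A) : A.det ≠ 0 := by
  intro hdet
  obtain ⟨v, hv, hAv⟩ := Matrix.exists_mulVec_eq_zero_iff.mpr hdet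
  apply hv
  have h1 : v 1 = 0 := by
    have := congrFun hAv 0
    simpa [Matrix.mulVec, h.row] using this
  have h2 : (fun i : Fin m => v i.succ.succ) = 0 := by
    by_contra hne
    apply h.pos.isUnit.map Matrix.detMonoidHom |>.ne_zero
    refine Matrix.exists_mulVec_eq_zero_iff.mp ⟨_, hne, ?_⟩
    ext i
    have := congrFun hAv i.succ.succ
    have hc := h.col i.succ.succ
    have e : (Pi.single 1 1 : Fin (m + 2) → ℝ) i.succ.succ = 0 :=
      Pi.single_eq_of_ne (by simp [Fin.ext_iff]) _
    rw [e] at hc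
    simpa [Matrix.mulVec, dotProduct, Fin.sum_univ_succ, hc, h1] using this
  have h0 : v 0 = 0 := by
    have := congrFun hAv 1
    have hc := h.col 1
    have h3 : ∀ i : Fin m, v i.succ.succ = 0 := fun i => congrFun h2 i
    simpa [Matrix.mulVec, dotProduct, Fin.sum_univ_succ, hc, h1, h3] using this
  ext a
  refine Fin.cases h0 (fun a => ?_) a
  refine Fin.cases h1 (fun a => ?_) a
  exact congrFun h2 a

lemma inv_row (h : NullMatrix A) (b : Fin (m + 2)) : A⁻¹ 1 b = if b = 0 then 1 else 0 := by
  have := congrFun (congrFun (Matrix.mul_nonsing_inv A h.det_ne_zero.isUnit) 0) b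
  rw [Matrix.mul_apply, h.row] at this
  simpa [Matrix.one_apply, eq_comm, Pi.single_apply] using this

lemma inv_col (h : NullMatrix A) (a : Fin (m + 2)) : A⁻¹ a 1 = if a = 0 then 1 else 0 := by
  have := congrFun (congrFun (Matrix.nonsing_inv_mul A h.det_ne_zero.isUnit) a) 0
  rw [Matrix.mul_apply] at this
  simpa [Matrix.one_apply, h.col, Pi.single_apply] using this

/-- The slice block of the inverse is the inverse of the slice block. -/
lemma inv_block (h : NullMatrix A) :
    (A.submatrix (fun i : Fin m => i.succ.succ) (fun i : Fin m => i.succ.succ))⁻¹ =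
      A⁻¹.submatrix (fun i : Fin m => i.succ.succ) (fun i : Fin m => i.succ.succ) := by
  apply Matrix.inv_eq_left_inv
  ext p q
  have := congrFun (congrFun (Matrix.nonsing_inv_mul A h.det_ne_zero.isUnit) p.succ.succ) q.succ.succ
  have hr : A 0 q.succ.succ = 0 := by
    rw [h.row]
    exact Pi.single_eq_of_ne (by simp [Fin.ext_iff]) _
  have hc := h.inv_col p.succ.succ
  rw [if_neg (Fin.succ_ne_zero _)] at hc
  rw [Matrix.mul_apply, Fin.sum_univ_succ, Fin.sum_univ_succ] at this
  rw [Matrix.mul_apply]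
  simpa [hr, hc, Matrix.one_apply] using this

end NullMatrix

/-- A metric on `U` in null-coordinate form, smooth, with components independent of `x⁰`. -/
structure BrinkmannOn {m : ℕ} (U : Set (Fin (m + 2) → ℝ))
    (g : (Fin (m + 2) → ℝ) → Matrix (Fin (m + 2)) (Fin (m + 2)) ℝ) : Prop where
  isOpen : IsOpen U
  smooth : ∀ i j, ContDiffOn ℝ (⊤ : ℕ∞) (fun y => g y i j) U
  null : ∀ x ∈ U, NullMatrix (g x)
  indep : ∀ x ∈ U, ∀ a b, pd 0 (fun y => g y a b) x = 0

/-- The slice `{x⁰ = b, x¹ = c}` as a parametrised affine subspace. -/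
def slice {m : ℕ} (b c : ℝ) (z : Fin m → ℝ) : Fin (m + 2) → ℝ :=
  Fin.cons b (Fin.cons c z : Fin (m + 1) → ℝ)

/-- The linear part of `slice`. -/
noncomputable def sliceLin (m : ℕ) : (Fin m → ℝ) →L[ℝ] (Fin (m + 2) → ℝ) :=
  ContinuousLinearMap.pi
    (Fin.cons 0 (Fin.cons 0 (fun i => ContinuousLinearMap.proj i) :
      Fin (m + 1) → ((Fin m → ℝ) →L[ℝ] ℝ)))

section Slice

variable {m : ℕ}

lemma slice_hasFDerivAt (b c : ℝ) (z : Fin m → ℝ) :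
    HasFDerivAt (slice b c) (sliceLin m) z := by
  rw [hasFDerivAt_pi']
  intro a
  refine Fin.cases ?_ (fun a => ?_) a
  · exact hasFDerivAt_const b z
  · refine Fin.cases ?_ (fun a => ?_) a
    · exact hasFDerivAt_const c z
    · exact hasFDerivAt_apply a z

lemma sliceLin_single (i : Fin m) :
    sliceLin m (Pi.single i 1) = Pi.single i.succ.succ 1 := by
  ext a
  refine Fin.cases ?_ (fun a => ?_) a
  · simp [sliceLin, Fin.ext_iff]
  · refine Fin.cases ?_ (fun a => ?_) a
    · simp [sliceLin, Fin.ext_iff]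
    · simp [sliceLin, Pi.single_apply]

lemma pd_slice {f : (Fin (m + 2) → ℝ) → ℝ} {b c : ℝ} {z : Fin m → ℝ}
    (hf : DifferentiableAt ℝ f (slice b c z)) (i : Fin m) :
    pd i (fun w => f (slice b c w)) z = pd i.succ.succ f (slice b c z) := by
  have := hf.hasFDerivAt.comp z (slice_hasFDerivAt b c z)
  unfold pd
  rw [← sliceLin_single, show (fun w => f (slice b c w)) = f ∘ slice b c from rfl, this.fderiv]
  rfl

end Slice

namespace BrinkmannOn

variable {m : ℕ} {U : Set (Fin (m + 2) → ℝ)}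
  {g : (Fin (m + 2) → ℝ) → Matrix (Fin (m + 2)) (Fin (m + 2)) ℝ} {x : Fin (m + 2) → ℝ}

lemma contDiffAt (h : BrinkmannOn U g) (hx : x ∈ U) (a b : Fin (m + 2)) :
    ContDiffAt ℝ (⊤ : ℕ∞) (fun y => g y a b) x :=
  (h.smooth a b).contDiffAt (h.isOpen.mem_nhds hx)

lemma pd_eq_zero {f : (Fin (m + 2) → ℝ) → ℝ} {r : ℝ} (hU : IsOpen U) (hx : x ∈ U)
    (hf : ∀ y ∈ U, f y = r) (a : Fin (m + 2)) : pd a f x = 0 := by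
  have : f =ᶠ[nhds x] fun _ => r := Filter.eventually_of_mem (hU.mem_nhds hx) hf
  simp [pd, this.fderiv_eq]

lemma pd_row (h : BrinkmannOn U g) (hx : x ∈ U) (a b : Fin (m + 2)) :
    pd a (fun y => g y 0 b) x = 0 :=
  pd_eq_zero h.isOpen hx (fun y hy => congrFun (h.null y hy).row b) a

lemma pd_col (h : BrinkmannOn U g) (hx : x ∈ U) (a b : Fin (m + 2)) :
    pd a (fun y => g y b 0) x = 0 :=
  pd_eq_zero h.isOpen hx (fun y hy => (h.null y hy).col b) a

/-- `Γ^1_{ab} = 0`: the one-form `dx¹ = g(∂₀, ·)` is parallel. -/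
lemma chr_one (h : BrinkmannOn U g) (hx : x ∈ U) (a b : Fin (m + 2)) : Chr g 1 a b x = 0 := by
  simp [Chr, (h.null x hx).inv_row, h.pd_col hx, h.indep x hx]

/-- `Γ^k_{a0} = 0`: the vector field `∂₀` is parallel. -/
lemma chr_zero (h : BrinkmannOn U g) (hx : x ∈ U) (k a : Fin (m + 2)) : Chr g k a 0 x = 0 := by
  simp [Chr, h.pd_col hx, h.pd_row hx, h.indep x hx]

lemma differentiableAt_det {k : ℕ} {M : (Fin (m + 2) → ℝ) → Matrix (Fin k) (Fin k) ℝ}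
    (hM : ∀ a b, DifferentiableAt ℝ (fun y => M y a b) x) :
    DifferentiableAt ℝ (fun y => (M y).det) x := by
  simp only [Matrix.det_apply']
  fun_prop

/-- Differentiability of the entries of `g⁻¹`, by Cramer's rule. -/
lemma differentiableAt_inv (h : BrinkmannOn U g) (hx : x ∈ U) (a b : Fin (m + 2)) :
    DifferentiableAt ℝ (fun y => (g y)⁻¹ a b) x := by
  have hg : ∀ a b, DifferentiableAt ℝ (fun y => g y a b) x := fun a b =>
    (h.contDiffAt hx a b).differentiableAt (by simp)
  simp only [Matrix.inv_def, Matrix.smul_apply, Ring.inverse_eq_inv', smul_eq_mul,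
    Matrix.adjugate_apply]
  refine ((differentiableAt_det hg).inv (h.null x hx).det_ne_zero).mul (differentiableAt_det ?_)
  intro c d
  by_cases hc : c = b
  · subst hc
    simp
  · simpa [Matrix.updateRow_ne hc] using hg c d

lemma differentiableAt_pd (h : BrinkmannOn U g) (hx : x ∈ U) (a b c : Fin (m + 2)) :
    DifferentiableAt ℝ (pd c (fun y => g y a b)) x := by
  have h1 : ContDiffAt ℝ 1 (fderiv ℝ (fun y => g y a b)) x :=
    (h.contDiffAt hx a b).fderiv_right (WithTop.coe_le_coe.2 (le_top : (1 + 1 : ℕ∞) ≤ ⊤))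
  exact (h1.differentiableAt (by simp)).clm_apply (differentiableAt_const _)

lemma differentiableAt_chr (h : BrinkmannOn U g) (hx : x ∈ U) (k a b : Fin (m + 2)) :
    DifferentiableAt ℝ (Chr g k a b) x := by
  have h1 := h.differentiableAt_inv hx
  have h2 := h.differentiableAt_pd hx
  refine (DifferentiableAt.fun_sum fun l _ => ?_).const_mul _
  exact (h1 k l).mul (((h2 b l a).add (h2 a l b)).sub (h2 a b l))

/-- The metric induced on the slice `{x⁰ = b, x¹ = c}`. -/
def sliceMetric (g : (Fin (m + 2) → ℝ) → Matrix (Fin (m + 2)) (Fin (m + 2)) ℝ) (b c : ℝ)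
    (z : Fin m → ℝ) : Matrix (Fin m) (Fin m) ℝ :=
  (g (slice b c z)).submatrix (fun i => i.succ.succ) (fun i => i.succ.succ)

lemma pd_sliceMetric (h : BrinkmannOn U g) {b c : ℝ} {z : Fin m → ℝ} (hz : slice b c z ∈ U)
    (i j k : Fin m) : pd k (fun w => sliceMetric g b c w i j) z =
      pd k.succ.succ (fun y => g y i.succ.succ j.succ.succ) (slice b c z) :=
  pd_slice (f := fun y => g y i.succ.succ j.succ.succ)
    ((h.contDiffAt hz _ _).differentiableAt (by simp)) k

lemma chr_slice (h : BrinkmannOn U g) {b c : ℝ} {z : Fin m → ℝ} (hz : slice b c z ∈ U)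
    (k i j : Fin m) : Chr (sliceMetric g b c) k i j z =
      Chr g k.succ.succ i.succ.succ j.succ.succ (slice b c z) := by
  have hN := h.null _ hz
  have hc := hN.inv_col k.succ.succ
  rw [if_neg (Fin.succ_ne_zero _)] at hc
  have hinv : ∀ l, (sliceMetric g b c z)⁻¹ k l = (g (slice b c z))⁻¹ k.succ.succ l.succ.succ :=
    fun l => congrFun (congrFun hN.inv_block k) l
  unfold Chr
  rw [Fin.sum_univ_succ, Fin.sum_univ_succ, h.pd_col hz, h.pd_col hz, h.indep _ hz,
    Fin.succ_zero_eq_one, hc]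
  simp only [hinv, h.pd_sliceMetric hz]
  ring

lemma pd_chr_slice (h : BrinkmannOn U g) {b c : ℝ} {z : Fin m → ℝ} (hz : slice b c z ∈ U)
    (a k i j : Fin m) : pd a (Chr (sliceMetric g b c) k i j) z =
      pd a.succ.succ (Chr g k.succ.succ i.succ.succ j.succ.succ) (slice b c z) := by
  rw [← pd_slice (h.differentiableAt_chr hz _ _ _)]
  have hcont : ContinuousAt (slice b c) z := (slice_hasFDerivAt b c z).continuousAt
  have : Chr (sliceMetric g b c) k i j =ᶠ[nhds z]
      fun w => Chr g k.succ.succ i.succ.succ j.succ.succ (slice b c w) :=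
    (hcont.eventually (h.isOpen.mem_nhds hz)).mono fun w hw => h.chr_slice hw k i j
  unfold pd
  rw [this.fderiv_eq]

lemma riemUp_one (h : BrinkmannOn U g) (hx : x ∈ U) (i j k : Fin (m + 2)) :
    RiemUp g i j k 1 x = 0 := by
  have hpd : ∀ a b c, pd a (Chr g 1 b c) x = 0 := fun a b c =>
    pd_eq_zero h.isOpen hx (fun y hy => h.chr_one hy b c) a
  simp [RiemUp, hpd, h.chr_one hx]

lemma riemUp_slice (h : BrinkmannOn U g) {b c : ℝ} {z : Fin m → ℝ} (hz : slice b c z ∈ U)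
    (i j k l : Fin m) : RiemUp (sliceMetric g b c) i j k l z =
      RiemUp g i.succ.succ j.succ.succ k.succ.succ l.succ.succ (slice b c z) := by
  unfold RiemUp
  rw [Fin.sum_univ_succ, Fin.sum_univ_succ, Fin.succ_zero_eq_one]
  simp only [h.chr_zero hz, h.chr_one hz, h.chr_slice hz, h.pd_chr_slice hz]
  ring

lemma rm4_slice (h : BrinkmannOn U g) {b c : ℝ} {z : Fin m → ℝ} (hz : slice b c z ∈ U)
    (i j k l : Fin m) :
    Rm4 g i.succ.succ j.succ.succ k.succ.succ l.succ.succ (slice b c z) =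
      Rm4 (sliceMetric g b c) i j k l z := by
  have hl : g (slice b c z) l.succ.succ 0 = 0 := by
    rw [(h.null _ hz).col]
    exact Pi.single_eq_of_ne (by simp [Fin.ext_iff]) _
  unfold Rm4
  rw [Fin.sum_univ_succ, Fin.sum_univ_succ, Fin.succ_zero_eq_one, h.riemUp_one hz, hl]
  simp only [h.riemUp_slice hz]
  simp [sliceMetric]

end BrinkmannOn

/-- In a Brinkmann spacetime in null coordinates (all metric components independent of `x⁰`),
the coordinate curvature 4-tensor of the ambient metric, evaluated on the slice directions
`∂₂,…,∂ₙ`, equals the coordinate curvature 4-tensor of the induced Riemannian metric on each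
codimension-2 slice `{x⁰ = b, x¹ = c}`. -/
theorem stmt_15 (n : ℕ) (hn : 3 ≤ n)
    (U : Set (Fin (n+1) → ℝ)) (hU : IsOpen U)
    (g : (Fin (n+1) → ℝ) → Matrix (Fin (n+1)) (Fin (n+1)) ℝ)
    (hg_smooth : ∀ i j : Fin (n+1), ContDiffOn ℝ (⊤ : ℕ∞) (fun y => g y i j) U)
    (hg_symm : ∀ x ∈ U, (g x).IsSymm)
    (hg00 : ∀ x ∈ U, g x 0 0 = 0)
    (hg01 : ∀ x ∈ U, g x 0 1 = 1)
    (hg0i : ∀ x ∈ U, ∀ i : Fin (n+1), 2 ≤ (i : ℕ) → g x 0 i = 0)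
    (ι : Fin (n-1) → Fin (n+1))
    (hι : ∀ i : Fin (n-1), (ι i : ℕ) = (i : ℕ) + 2)
    (hg_pos : ∀ x ∈ U, ((g x).submatrix ι ι).PosDef)
    (hg_indep : ∀ x ∈ U, ∀ a b : Fin (n+1), pd 0 (fun y => g y a b) x = 0)
    (emb : ℝ → ℝ → (Fin (n-1) → ℝ) → (Fin (n+1) → ℝ))
    (hemb0 : ∀ b c z, emb b c z 0 = b)
    (hemb1 : ∀ b c z, emb b c z 1 = c)
    (hembι : ∀ b c z i, emb b c z (ι i) = z i)
    (gbar : ℝ → ℝ → (Fin (n-1) → ℝ) → Matrix (Fin (n-1)) (Fin (n-1)) ℝ)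
    (hgbar : ∀ b c z (i j : Fin (n-1)), gbar b c z i j = g (emb b c z) (ι i) (ι j)) :
    ∀ (b c : ℝ) (z : Fin (n-1) → ℝ), emb b c z ∈ U →
      ∀ i j k l : Fin (n-1),
        Rm4 g (ι i) (ι j) (ι k) (ι l) (emb b c z) = Rm4 (gbar b c) i j k l z := by
  obtain ⟨m, rfl⟩ : ∃ m, n = m + 1 := ⟨n - 1, by omega⟩
  -- `m + 1 - 1` reduces definitionally to `m`
  change Fin m → Fin (m + 2) at ι
  obtain rfl : ι = fun i : Fin m => i.succ.succ := by
    funext i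
    ext
    simpa using hι i
  have hB : BrinkmannOn (m := m) U g := by
    refine ⟨hU, hg_smooth, fun x hx => ⟨hg_symm x hx, ?_, hg_pos x hx⟩, hg_indep⟩
    funext a
    refine Fin.cases ?_ (fun a => ?_) a
    · rw [hg00 x hx, Pi.single_eq_of_ne (by simp)]
    · refine Fin.cases ?_ (fun a => ?_) a
      · exact (hg01 x hx).trans (Pi.single_eq_same (M := fun _ => ℝ) (1 : Fin (m + 2)) 1).symm
      · rw [hg0i x hx _ (by simp), Pi.single_eq_of_ne (by simp [Fin.ext_iff])]
  have hE : ∀ b c (z : Fin m → ℝ), emb b c z = slice b c z := by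
    intro b c z
    funext a
    refine Fin.cases (hemb0 b c z) (fun a => ?_) a
    exact Fin.cases (hemb1 b c z) (fun a => hembι b c z a) a
  have hG : ∀ b c, gbar b c = BrinkmannOn.sliceMetric (m := m) g b c := by
    intro b c
    funext z
    ext i j
    rw [hgbar, hE]
    rfl
  intro b c z hz i j k l
  rw [hE] at hz ⊢
  rw [hG]
  exact hB.rm4_slice hz i j k l
end

section
/- Let n ≥ 2 and on ℝ^{n+1} with coordinates (r, t, x², …, xⁿ) let h be the Lorentzian plane wave metric represented by the matrix field h_{rt} = h_{tr} = 1, h_{ii} = e^{√2 r} for 2 ≤ i ≤ n, all other entries zero (i.e. h = 2 dr dt + Σ_i e^{√2 r}(dxⁱ)²). Then the coordinate Ricci tensor of h satisfies Ric_h = −((n−1)/2) dr ⊗ dr, i.e. (Ric_h)_{rr} = −(n−1)/2 and all other components of Ric_h vanish. -/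
/-!
Write `E = exp (√2 r)`. Every metric coefficient is constant or equal to `E`, so `∂_a h_{ij}` is
nonzero only for `a = r`, `i = j ≥ 2` (`pd_metric`). The inverse metric swaps `r` and `t` and is
`E⁻¹` on the remaining diagonal (`inv_metric`). Hence (`chr_metric`) the only nonzero Christoffel
symbols are `Γ^t_{ii} = -(√2/2) E` and `Γ^i_{ri} = Γ^i_{ir} = √2/2` with `i ≥ 2`. In the Ricci
tensor the derivative terms vanish: `Γ^t` depends on `r` only and the others are constant. The
products `Γ^i_{ip} Γ^p_{jk}` vanish because `Γ^i_{ip} ≠ 0` forces `p = r` and `Γ^r = 0`. Finally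
`Γ^i_{jp} Γ^p_{ik}` is nonzero only for `p = i ≥ 2`, `j = k = r`, where it equals `1/2`; there are
`n - 1` such `i`.
-/

open Matrix

/-- The matrix field of `2 dr dt + Σᵢ e^{√2 r}(dxⁱ)²` on `ℝ^{m+3}`, so that `n = m + 2`. -/
noncomputable def planeWave (m : ℕ) (x : Fin (m+3) → ℝ) : Matrix (Fin (m+3)) (Fin (m+3)) ℝ :=
  fun i j => if (i = 0 ∧ j = 1) ∨ (i = 1 ∧ j = 0) then 1
      else if i = j ∧ 2 ≤ (i : ℕ) then Real.exp (Real.sqrt 2 * x 0)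
      else 0

/-- The inverse matrix field of `planeWave`. -/
noncomputable def planeWaveInv (m : ℕ) (x : Fin (m+3) → ℝ) :
    Matrix (Fin (m+3)) (Fin (m+3)) ℝ :=
  fun i j => if (i = 0 ∧ j = 1) ∨ (i = 1 ∧ j = 0) then 1
      else if i = j ∧ 2 ≤ (i : ℕ) then (Real.exp (Real.sqrt 2 * x 0))⁻¹
      else 0

lemma pd_exp (m : ℕ) (a : Fin (m+3)) (c : ℝ) (x : Fin (m+3) → ℝ) :
    pd a (fun y => c * Real.exp (Real.sqrt 2 * y 0)) x =
      if a = 0 then c * (Real.sqrt 2 * Real.exp (Real.sqrt 2 * x 0)) else 0 := by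
  have h0 : HasFDerivAt (fun y : Fin (m+3) → ℝ => y 0)
      (ContinuousLinearMap.proj (R := ℝ) (φ := fun _ : Fin (m+3) => ℝ) 0) x :=
    hasFDerivAt_apply 0 x
  have h1 := (((h0.const_mul (Real.sqrt 2)).exp).const_mul c)
  unfold pd
  rw [h1.fderiv]
  by_cases ha : a = 0
  · subst ha
    simp [mul_comm]
  · simp [ha, Ne.symm ha]

lemma pd_metric (m : ℕ) (a i j : Fin (m+3)) (x : Fin (m+3) → ℝ) :
    pd a (fun y => planeWave m y i j) x =
      if a = 0 ∧ i = j ∧ 2 ≤ (i : ℕ) then Real.sqrt 2 * Real.exp (Real.sqrt 2 * x 0) else 0 := by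
  by_cases h1 : (i = 0 ∧ j = 1) ∨ (i = 1 ∧ j = 0)
  · have : ¬ (i = j ∧ 2 ≤ (i : ℕ)) := by
      rintro ⟨rfl, h2⟩
      rcases h1 with ⟨h, h'⟩ | ⟨h, h'⟩ <;> simp [h] at h'
    simp [planeWave, h1, this, pd_const]
  · by_cases h2 : i = j ∧ 2 ≤ (i : ℕ)
    · have := pd_exp m a 1 x
      simp only [one_mul] at this
      simp only [planeWave, if_neg h1, if_pos h2, this, and_iff_left h2]
    · simp [planeWave, h1, h2, pd_const]

lemma two_le_cases {m : ℕ} (i : Fin (m+3)) : i = 0 ∨ i = 1 ∨ (i ≠ 0 ∧ i ≠ 1 ∧ 2 ≤ (i : ℕ)) := by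
  simp only [ne_eq, Fin.ext_iff, Fin.val_zero, Fin.val_one]
  omega

lemma sum_planeWaveInv (m : ℕ) (x : Fin (m+3) → ℝ) (k : Fin (m+3)) (F : Fin (m+3) → ℝ) :
    ∑ l, planeWaveInv m x k l * F l =
      if k = 0 then F 1 else if k = 1 then F 0
      else (Real.exp (Real.sqrt 2 * x 0))⁻¹ * F k := by
  rcases two_le_cases k with rfl | rfl | ⟨h0, h1, h2⟩
  · simp [planeWaveInv]
  · simp [planeWaveInv]
  · simp [planeWaveInv, h0, h1, h2]

lemma inv_metric (m : ℕ) (x : Fin (m+3) → ℝ) : (planeWave m x)⁻¹ = planeWaveInv m x := by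
  apply Matrix.inv_eq_left_inv
  ext i j
  rw [Matrix.mul_apply, sum_planeWaveInv, Matrix.one_apply]
  rcases two_le_cases i with rfl | rfl | ⟨h0, h1, h2⟩
  · simp [planeWave, eq_comm]
  · simp [planeWave, eq_comm]
  · simp [planeWave, h0, h1, h2]

lemma chr_metric (m : ℕ) (k i j : Fin (m+3)) (x : Fin (m+3) → ℝ) :
    Chr (planeWave m) k i j x =
      if k = 0 then 0
      else if k = 1 then
        (if i = j ∧ 2 ≤ (i : ℕ) then -(Real.sqrt 2 / 2) * Real.exp (Real.sqrt 2 * x 0) else 0)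
      else if (i = 0 ∧ j = k) ∨ (j = 0 ∧ i = k) then Real.sqrt 2 / 2 else 0 := by
  unfold Chr
  rw [inv_metric, sum_planeWaveInv]
  simp only [pd_metric]
  have hE := Real.exp_ne_zero (Real.sqrt 2 * x 0)
  rcases two_le_cases k with rfl | rfl | ⟨h0, h1, h2⟩
  · have : ∀ i : Fin (m+3), ¬ (i = 1 ∧ 2 ≤ (i : ℕ)) := by
      rintro i ⟨rfl, h⟩
      simp at h
    simp [this]
  · have : ∀ i : Fin (m+3), ¬ (i = 0 ∧ 2 ≤ (i : ℕ)) := by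
      rintro i ⟨rfl, h⟩
      simp at h
    simp [this]
    split_ifs <;> ring
  · have e1 : ∀ i : Fin (m+3), (i = k ∧ 2 ≤ (i : ℕ)) ↔ i = k := by
      intro i
      constructor
      · exact fun h => h.1
      · rintro rfl
        exact ⟨rfl, h2⟩
    simp only [h0, h1, e1, if_false, false_and, sub_zero]
    by_cases hi : i = 0
    · subst hi
      by_cases hj : j = k
      · subst hj
        simp [h0]
        field_simp
      · simp [hj, Ne.symm h0]
    · by_cases hj : j = 0 ∧ i = k
      · obtain ⟨rfl, rfl⟩ := hj
        simp [hi]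
        field_simp
      · simp [hi, hj]

/-- `Γ^t` depends on `r` only and the other symbols are constant. -/
lemma pd_chr (m : ℕ) (a k i j : Fin (m+3)) (x : Fin (m+3) → ℝ)
    (h : ¬ (a = 0 ∧ k = 1 ∧ i = j ∧ 2 ≤ (i : ℕ))) :
    pd a (Chr (planeWave m) k i j) x = 0 := by
  rw [show Chr (planeWave m) k i j = _ from funext (chr_metric m k i j)]
  by_cases h0 : k = 0
  · simp [h0, pd_const]
  by_cases h1 : k = 1
  · by_cases h2 : i = j ∧ 2 ≤ (i : ℕ)
    · have ha : a ≠ 0 := fun ha => h ⟨ha, h1, h2⟩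
      simp only [if_neg h0, if_pos h1, if_pos h2, pd_exp, if_neg ha]
    · simp [h1, h2, pd_const]
  · simp [h0, h1, pd_const]

lemma chr_mul_trace (m : ℕ) (i j k p : Fin (m+3)) (x : Fin (m+3) → ℝ) :
    Chr (planeWave m) i i p x * Chr (planeWave m) p j k x = 0 := by
  by_cases hp : p = 0
  · simp [chr_metric, hp]
  · have : Chr (planeWave m) i i p x = 0 := by
      rw [chr_metric]
      rcases two_le_cases i with rfl | rfl | ⟨h0, h1, h2⟩
      · simp
      · simp
      · simp [h0, h1, hp]
    simp [this]

lemma chr_mul (m : ℕ) (i j k p : Fin (m+3)) (x : Fin (m+3) → ℝ) :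
    Chr (planeWave m) i j p x * Chr (planeWave m) p i k x =
      if p = i then (if (j = 0 ∧ k = 0) ∧ 2 ≤ (i : ℕ) then 1 / 2 else 0) else 0 := by
  have hs : Real.sqrt 2 / 2 * (Real.sqrt 2 / 2) = 1 / 2 := by
    have := Real.mul_self_sqrt (show (0 : ℝ) ≤ 2 by norm_num)
    linarith
  rw [chr_metric, chr_metric]
  rcases two_le_cases i with rfl | rfl | ⟨h0, h1, h2⟩
  · simp
  · rcases two_le_cases p with rfl | rfl | ⟨p0, p1, p2⟩
    · simp
    · simp
    · simp [p0, p1, Ne.symm p1]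
  · rcases two_le_cases p with rfl | rfl | ⟨p0, p1, p2⟩
    · simp [Ne.symm h0]
    · simp [Ne.symm h1]
      grind
    · by_cases hpi : p = i
      · subst hpi
        by_cases hj : j = 0 <;> by_cases hk : k = 0 <;> simp [h0, h1, h2, hj, hk, hs]
      · simp [h0, h1, p0, p1, hpi]

lemma card_two_le (m : ℕ) :
    ∑ i : Fin (m+3), (if 2 ≤ (i : ℕ) then (1 / 2 : ℝ) else 0) = ((m : ℝ) + 1) / 2 := by
  rw [Fin.sum_univ_succ, Fin.sum_univ_succ]
  simp
  ring

/-- The Lorentzian plane wave metric `2 dr dt + Σᵢ e^{√2 r}(dxⁱ)²` on `ℝ^{n+1}` (coordinates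
`0 = r`, `1 = t`) satisfies `Ric = −((n−1)/2) dr ⊗ dr`. -/
theorem stmt_17 (n : ℕ) (hn : 2 ≤ n)
    (h : (Fin (n+1) → ℝ) → Matrix (Fin (n+1)) (Fin (n+1)) ℝ)
    (hh : ∀ x (i j : Fin (n+1)), h x i j =
      if (i = 0 ∧ j = 1) ∨ (i = 1 ∧ j = 0) then 1
      else if i = j ∧ 2 ≤ (i : ℕ) then Real.exp (Real.sqrt 2 * x 0)
      else 0) :
    ∀ (x : Fin (n+1) → ℝ) (j k : Fin (n+1)),
      Ric h j k x = if j = 0 ∧ k = 0 then -(((n : ℝ) - 1) / 2) else 0 := by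
  obtain ⟨m, rfl⟩ := Nat.exists_eq_add_of_le' hn
  obtain rfl : h = planeWave m := by
    ext x i j
    exact hh x i j
  intro x j k
  have hR : ∀ i, RiemUp (planeWave m) i j k i x =
      -(if (j = 0 ∧ k = 0) ∧ 2 ≤ (i : ℕ) then 1 / 2 else 0) := by
    intro i
    unfold RiemUp
    rw [pd_chr, pd_chr]
    · simp only [chr_mul_trace, chr_mul, zero_sub, Finset.sum_neg_distrib, Finset.sum_ite_eq',
        Finset.mem_univ, if_true, sub_zero, zero_add]
    · rintro ⟨-, rfl, -, h2⟩
      simp at h2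
    · rintro ⟨rfl, h1, -⟩
      simp at h1
  unfold Ric
  simp only [hR, Finset.sum_neg_distrib]
  by_cases hjk : j = 0 ∧ k = 0
  · simp only [hjk, and_self, true_and, if_true]
    rw [card_two_le]
    push_cast
    ring
  · simp [hjk]
end

section
/- Let I ⊆ ℝ be an open interval, let H : I → ℝ be smooth and positive, and on I × ℝ² with coordinates (x¹, x², x³) let g_L be the Lorentzian metric represented by the matrix field with rows ((0, 1, 0), (1, H(x¹), 0), (0, 0, H(x¹)/2)). Then the coordinate Ricci tensor of g_L satisfies Ric_{g_L} = g_L (equivalently, g_L is an Einstein metric with Einstein constant 1, hence of constant positive sectional curvature in dimension 3) if and only if there exists a ∈ ℝ such that H(x¹) = (x¹ + a)²/2 for all x¹ ∈ I. -/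
/-!
Every coefficient of the metric depends on `s = x¹` alone, so the Christoffel symbols, hence the
Ricci tensor, can be computed explicitly in terms of `H`, `H'` and `H''` (`chr_eq_table`,
`ric_eq`). The `(1,1)` and `(1,2)` components of `Ric = g` read `H'² = 2 H H''` and
`2 H H'' + H'² = 4 H`; since `H ≠ 0` these amount to `H'' = 1` and `H'² = 2 H`. The first makes
`H' - s` a constant `a` on the interval, and the second then gives `H = (s + a)² / 2`.
Conversely, `H'' = 1` and `H'² = 2 H` turn every component of the Ricci tensor into that of the
metric.
-/

open Matrix

/-- The Christoffel symbols `Γ^k_{ij}` of the metric, in terms of the values `h` of `H` and `d` of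
`H'` at a point. -/
noncomputable def chrTable (h d : ℝ) (k : Fin 3) : Matrix (Fin 3) (Fin 3) ℝ :=
  ![!![0, d / 2, 0; d / 2, h * d / 2, 0; 0, 0, h * d / 4],
    !![0, 0, 0; 0, -d / 2, 0; 0, 0, -d / 4],
    !![0, 0, d / (2 * h); 0, 0, 0; d / (2 * h), 0, 0]] k

/-- The `x¹`-derivatives of the Christoffel symbols of the metric, in terms of the values `h` of
`H`, `d` of `H'` and `e` of `H''` at a point. -/
noncomputable def chrTableDeriv (h d e : ℝ) (k : Fin 3) : Matrix (Fin 3) (Fin 3) ℝ :=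
  ![!![0, e / 2, 0; e / 2, (d * d + h * e) / 2, 0; 0, 0, (d * d + h * e) / 4],
    !![0, 0, 0; 0, -e / 2, 0; 0, 0, -e / 4],
    !![0, 0, (e * h - d * d) / (2 * h ^ 2); 0, 0, 0; (e * h - d * d) / (2 * h ^ 2), 0, 0]] k

lemma hasDerivAt_chrTable {H D : ℝ → ℝ} {s e : ℝ} (hH : HasDerivAt H (D s) s)
    (hD : HasDerivAt D e s) (h0 : H s ≠ 0) (k i j : Fin 3) :
    HasDerivAt (fun t => chrTable (H t) (D t) k i j) (chrTableDeriv (H s) (D s) e k i j) s := by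
  have h1 := hD.div_const 2
  have h2 := (hH.mul hD).div_const 2
  have h3 := (hH.mul hD).div_const 4
  have h4 := hD.neg.div_const 2
  have h5 := hD.neg.div_const 4
  have h6 : HasDerivAt (fun t => D t / (2 * H t)) ((e * H s - D s * D s) / (2 * H s ^ 2)) s := by
    refine (hD.div (hH.const_mul 2) (mul_ne_zero two_ne_zero h0)).congr_deriv ?_
    field_simp
  have h7 := hasDerivAt_const s (0 : ℝ)
  fin_cases k <;> fin_cases i <;> fin_cases j <;> simp [chrTable, chrTableDeriv] <;> assumption

/-- A function that depends only on `x¹` over the open set `x¹ ∈ I` has there only the partial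
derivative in the direction `x¹`. -/
lemma pd_of_eq_comp {I : Set ℝ} (hI : IsOpen I) {F : (Fin 3 → ℝ) → ℝ} {f : ℝ → ℝ} {f' : ℝ}
    {x : Fin 3 → ℝ} (hx : x 0 ∈ I) (hF : ∀ y : Fin 3 → ℝ, y 0 ∈ I → F y = f (y 0))
    (hf : HasDerivAt f f' (x 0)) (i : Fin 3) :
    pd i F x = if i = 0 then f' else 0 := by
  have hopen : IsOpen {y : Fin 3 → ℝ | y 0 ∈ I} := hI.preimage (continuous_apply 0)
  have hev : F =ᶠ[nhds x] fun y => f (y 0) := by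
    filter_upwards [hopen.mem_nhds hx] with y hy using hF y hy
  have hproj : HasFDerivAt (fun y : Fin 3 → ℝ => y 0)
      (ContinuousLinearMap.proj (R := ℝ) (φ := fun _ : Fin 3 => ℝ) 0) x :=
    (ContinuousLinearMap.proj (R := ℝ) (φ := fun _ : Fin 3 => ℝ) 0).hasFDerivAt
  have hcomp := HasDerivAt.comp_hasFDerivAt x hf hproj
  unfold pd
  rw [hev.fderiv_eq, show (fun y : Fin 3 → ℝ => f (y 0)) = f ∘ fun y => y 0 from rfl,
    hcomp.fderiv]
  fin_cases i <;> simp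

lemma inv_metric_s19 {h : ℝ} (h0 : h ≠ 0) :
    (!![0, 1, 0; 1, h, 0; 0, 0, h / 2] : Matrix (Fin 3) (Fin 3) ℝ)⁻¹ =
      !![-h, 1, 0; 1, 0, 0; 0, 0, 2 / h] := by
  apply Matrix.inv_eq_right_inv
  ext i j
  fin_cases i <;> fin_cases j <;> simp [Matrix.mul_apply, Fin.sum_univ_three, h0]

lemma chr_eq_table {H : ℝ → ℝ} {g : (Fin 3 → ℝ) → Matrix (Fin 3) (Fin 3) ℝ}
    (hg : ∀ x : Fin 3 → ℝ, g x = !![0, 1, 0; 1, H (x 0), 0; 0, 0, H (x 0) / 2])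
    {x : Fin 3 → ℝ} {d : ℝ} (hH : HasDerivAt H d (x 0)) (h0 : H (x 0) ≠ 0) (k i j : Fin 3) :
    Chr g k i j x = chrTable (H (x 0)) d k i j := by
  have hpd : ∀ l a b : Fin 3, pd l (fun y => g y a b) x =
      if l = 0 then (!![0, 0, 0; 0, d, 0; 0, 0, d / 2] : Matrix (Fin 3) (Fin 3) ℝ) a b else 0 := by
    intro l a b
    refine pd_of_eq_comp isOpen_univ (Set.mem_univ _)
      (f := fun t => (!![0, 1, 0; 1, H t, 0; 0, 0, H t / 2] : Matrix (Fin 3) (Fin 3) ℝ) a b)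
      (fun y _ => by rw [hg]) ?_ l
    have h1 := hH.div_const 2
    have h2 := hasDerivAt_const (x 0) (0 : ℝ)
    have h3 := hasDerivAt_const (x 0) (1 : ℝ)
    fin_cases a <;> fin_cases b <;> simp <;> assumption
  unfold Chr
  simp only [hpd, hg x, inv_metric_s19 h0, Fin.sum_univ_three]
  fin_cases k <;> fin_cases i <;> fin_cases j <;> simp [chrTable] <;> field_simp <;> ring

/-- The Ricci tensor of the metric in terms of `H`, `D = H'` and `E = H''`. -/
lemma ric_eq {I : Set ℝ} (hI : IsOpen I) {H D E : ℝ → ℝ}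
    (hH : ∀ s ∈ I, HasDerivAt H (D s) s) (hD : ∀ s ∈ I, HasDerivAt D (E s) s)
    (h0 : ∀ s ∈ I, H s ≠ 0) {g : (Fin 3 → ℝ) → Matrix (Fin 3) (Fin 3) ℝ}
    (hg : ∀ x : Fin 3 → ℝ, g x = !![0, 1, 0; 1, H (x 0), 0; 0, 0, H (x 0) / 2])
    {x : Fin 3 → ℝ} (hx : x 0 ∈ I) {h d e : ℝ} (hh : H (x 0) = h) (hd : D (x 0) = d)
    (he : E (x 0) = e) (j k : Fin 3) :
    Ric g j k x =
      (!![d ^ 2 / (4 * h ^ 2) - e / (2 * h), e / 2 + d ^ 2 / (4 * h), 0;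
          e / 2 + d ^ 2 / (4 * h), h * e / 2 + d ^ 2 / 4, 0;
          0, 0, h * e / 4 + d ^ 2 / 8] : Matrix (Fin 3) (Fin 3) ℝ) j k := by
  have hchr : ∀ y : Fin 3 → ℝ, y 0 ∈ I → ∀ k i j,
      Chr g k i j y = chrTable (H (y 0)) (D (y 0)) k i j :=
    fun y hy => chr_eq_table hg (hH _ hy) (h0 _ hy)
  have hpd : ∀ l k i j, pd l (Chr g k i j) x =
      if l = 0 then chrTableDeriv h d e k i j else 0 := by
    intro l k i j
    subst hh hd he
    exact pd_of_eq_comp hI hx (f := fun t => chrTable (H t) (D t) k i j)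
      (fun y hy => hchr y hy k i j)
      (hasDerivAt_chrTable (hH _ hx) (hD _ hx) (h0 _ hx) k i j) l
  have hne : h ≠ 0 := hh ▸ h0 _ hx
  unfold Ric RiemUp
  simp only [hpd, hchr x hx, hh, hd, Fin.sum_univ_three]
  fin_cases j <;> fin_cases k <;> simp [chrTable, chrTableDeriv] <;> field_simp <;> ring

/-- On `I × ℝ²`, the Lorentzian metric with matrix `((0,1,0),(1,H(x¹),0),(0,0,H(x¹)/2))`
satisfies `Ric = g_L` (is Einstein with constant 1, hence of constant positive curvature in
dimension 3) iff `H(x¹) = (x¹ + a)²/2` on `I` for some constant `a`. -/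
theorem stmt_19 (I : Set ℝ) (hI_open : IsOpen I) (hI_conn : I.OrdConnected)
    (H : ℝ → ℝ) (hH_smooth : ContDiffOn ℝ (⊤ : ℕ∞) H I) (hH_pos : ∀ s ∈ I, 0 < H s)
    (g : (Fin 3 → ℝ) → Matrix (Fin 3) (Fin 3) ℝ)
    (hg : ∀ x : Fin 3 → ℝ, g x = !![0, 1, 0; 1, H (x 0), 0; 0, 0, H (x 0) / 2]) :
    (∀ x : Fin 3 → ℝ, x 0 ∈ I → ∀ j k : Fin 3, Ric g j k x = g x j k) ↔
    (∃ a : ℝ, ∀ s ∈ I, H s = (s + a)^2 / 2) := by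
  have hDiff : ∀ f : ℝ → ℝ, ContDiffOn ℝ (⊤ : ℕ∞) f I → ∀ s ∈ I, HasDerivAt f (deriv f s) s :=
    fun f hf s hs =>
      ((hf.differentiableOn (by simp)).differentiableAt (hI_open.mem_nhds hs)).hasDerivAt
  have hH1 := hDiff H hH_smooth
  have hH2 := hDiff (deriv H) (hH_smooth.deriv_of_isOpen hI_open (by simp))
  have h0 : ∀ s ∈ I, H s ≠ 0 := fun s hs => (hH_pos s hs).ne'
  constructor
  · intro hRic
    have key : ∀ s ∈ I, deriv (deriv H) s = 1 ∧ deriv H s ^ 2 = 2 * H s := by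
      intro s hs
      have e1 := hRic (fun _ => s) hs 0 0
      have e2 := hRic (fun _ => s) hs 0 1
      rw [ric_eq hI_open hH1 hH2 h0 hg hs rfl rfl rfl, hg] at e1 e2
      have := h0 s hs
      simp at e1 e2
      field_simp at e1 e2
      -- `e1` says `H'² = 2 H H''`, and `e2` says `2 H H'' + H'² = 4 H`.
      have e3 : deriv (deriv H) s = 1 := by
        apply mul_left_cancel₀ this
        linarith
      rw [e3] at e1
      exact ⟨e3, by linarith⟩
    rcases I.eq_empty_or_nonempty with rfl | ⟨s₀, hs₀⟩
    · exact ⟨0, by simp⟩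
    have hconst : ∀ s ∈ I, deriv H s - s = deriv H s₀ - s₀ := by
      intro s hs
      have hder : ∀ t ∈ I, HasDerivAt (fun t => deriv H t - t) 0 t := by
        intro t ht
        have := (hH2 t ht).sub (hasDerivAt_id t)
        rw [(key t ht).1, sub_self] at this
        exact this
      exact hI_open.is_const_of_deriv_eq_zero hI_conn.isPreconnected
        (fun t ht => (hder t ht).differentiableAt.differentiableWithinAt)
        (fun t ht => (hder t ht).deriv) hs hs₀
    refine ⟨deriv H s₀ - s₀, fun s hs => ?_⟩
    rw [← hconst s hs, add_sub_cancel, (key s hs).2]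
    ring
  · rintro ⟨a, ha⟩ x hx j k
    have hd : ∀ s ∈ I, deriv H s = s + a := by
      intro s hs
      have hev : H =ᶠ[nhds s] fun t => (t + a) ^ 2 / 2 := by
        filter_upwards [hI_open.mem_nhds hs] with t ht using ha t ht
      rw [hev.deriv_eq]
      have := (((hasDerivAt_id s).add_const a).pow 2).div_const 2
      exact (this.congr_deriv (by simp)).deriv
    have he : ∀ s ∈ I, deriv (deriv H) s = 1 := by
      intro s hs
      have hev : deriv H =ᶠ[nhds s] fun t => t + a := by
        filter_upwards [hI_open.mem_nhds hs] with t ht using hd t ht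
      rw [hev.deriv_eq]
      simp
    have hsq : (x 0 + a) ^ 2 = 2 * H (x 0) := by rw [ha _ hx]; ring
    have := h0 _ hx
    rw [ric_eq hI_open hH1 hH2 h0 hg hx rfl (hd _ hx) (he _ hx), hg, hsq]
    fin_cases j <;> fin_cases k <;> simp <;> field_simp <;> ring
end
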